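/- Let τ be a faithful irreducible complex representation of G and suppose p^n does not divide q−1. Then for every finite-dimensional representation σ of G over ℚ, the multiplicity ⟨ℂ ⊗_ℚ σ, τ⟩ of τ in the complexification of σ is divisible by p. -/

import Mathlib

/-!
Write `M = q * p ^ s` with `s = n - r`, let `c = b ^ (p ^ r)` (a central element of order `p ^ s`)
and `d = a * c`. On a faithful irreducible `τ` the element `c` acts by a primitive `p ^ s`-th root
of unity `ν`, and `a` has an eigenvector whose eigenvalue `μ` is a primitive `q`-th root of unity;
`τ` has as a basis the `b⁻¹`-translates of this vector. Hence an intertwining map from `τ` to a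
representation is the same thing as a `ξ`-eigenvector of `d`, where `ξ = μ * ν` is a primitive
`M`-th root of unity, and the multiplicity is the dimension of an eigenspace
(`finrank_intertwiningMap`).

For the complexification of a rational representation, this dimension may be computed over
`L = ℚ(ξ)`: let `E` be the `ξ`-eigenspace of `d` on the scalar extension to `L`, and `k = dim E`.
Since `b d b⁻¹ = d ^ u` with `u ≡ j` mod `q` and `u ≡ 1` mod `p ^ s`, the operator `b` composed with
the automorphism `θ : ξ ↦ ξ ^ u` of `L` acts `θ`-semilinearly on `E`, and its `p ^ r`-th iterate is
the scalar `ν`. Taking determinants, `ν ^ k = ∏ i < p ^ r, θ^[i] α` for some `α ∈ L`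
(`exists_norm_of_semilinear`, `exists_norm_of_matrix`).

The norm equation forces `p ∣ k` (`dvd_of_prod_eq_pow`). Take a prime `Q` of `L` above `q`. Modulo
`Q` the `q`-part of `ξ` becomes `1`, so `θ` stabilises `Q` and is trivial on the residue field.
Thus `α` is a `Q`-unit, and its residue `ω` satisfies `ω ^ (p ^ r) = ν ^ k`. If `p ∤ k`, then `ω` has
order `p ^ (r + s) = p ^ n`. But the residue field satisfies `x ^ (q ^ N) = x`, where `p ^ n` does not
divide `q ^ N - 1`: as `p` is odd, lifting the exponent yields such an `N`, with
`p ^ s ∣ q ^ N - 1`, from `p ∣ q - 1` and `p ^ n ∤ q - 1` (`exists_frobenius_exponent`).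
-/

open CategoryTheory Finset

/-! ### The determinant of a semilinear operator -/

/-- If the `m`-th iterate of a `θ`-semilinear operator is the scalar `μ`, then `μ ^ dim E` is a
twisted product `∏ i < m, θ^[i] α`, with `α` the determinant of the operator in a basis: in
coordinates `T = A ∘ θ`, so `T^[m]` has matrix `A * θ(A) * ⋯ * θ^[m - 1](A)`. -/
theorem exists_norm_of_semilinear {L E : Type*} [Field L] [AddCommGroup E] [Module L E]
    [FiniteDimensional L E] (θ : L →+* L) (T : E →ₛₗ[θ] E) (m : ℕ) (μ : L)
    (hT : ∀ x, T^[m] x = μ • x) :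
    ∃ α : L, ∏ i ∈ range m, θ^[i] α = μ ^ Module.finrank L E := by
  let B := Module.finBasis L E
  let A : Matrix (Fin (Module.finrank L E)) (Fin (Module.finrank L E)) L :=
    fun i j => B.repr (T (B j)) i
  have key : ∀ m : ℕ, ∃ P : Matrix (Fin (Module.finrank L E)) (Fin (Module.finrank L E)) L,
      P.det = ∏ i ∈ range m, θ^[i] A.det ∧ ∀ j, T^[m] (B j) = ∑ i, P i j • B i := by
    intro m
    induction m with
    | zero => exact ⟨1, by simp, fun j => by simp [Matrix.one_apply]⟩
    | succ m ih =>
      obtain ⟨P, hP, hPT⟩ := ih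
      refine ⟨A * P.map θ, ?_, fun j => ?_⟩
      · rw [Matrix.det_mul, prod_range_succ', mul_comm]
        congr 1
        have := (RingHom.map_det θ P).symm
        rw [RingHom.mapMatrix_apply] at this
        rw [this, hP, map_prod]
        simp only [Function.iterate_succ_apply']
      · rw [Function.iterate_succ_apply', hPT, map_sum]
        have hB : ∀ i, T (B i) = ∑ l, A l i • B l := fun i => (B.sum_repr (T (B i))).symm
        simp only [LinearMap.map_smulₛₗ, hB, Matrix.mul_apply, Matrix.map_apply, sum_smul,
          smul_sum, smul_smul]
        rw [sum_comm]
        simp only [mul_comm]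
  obtain ⟨P, hP, hPT⟩ := key m
  refine ⟨A.det, ?_⟩
  have : P = μ • (1 : Matrix _ _ L) := by
    ext i j
    have h := congrArg (fun x => B.repr x i) ((hPT j).symm.trans (hT _))
    simpa [Finsupp.single_apply, Matrix.one_apply, eq_comm] using h
  rw [← hP, this, Matrix.det_smul]
  simp

/-! ### Reduction at a prime above `q` -/

/-- The exponent is `N = p ^ (s - t)` when `p ^ t` is the exact power of `p` dividing `q - 1` and
`t < s`, and `N = 1` otherwise. -/
theorem exists_frobenius_exponent {p q r s : ℕ} (hp : p.Prime) (hq : q.Prime) (hpodd : Odd p)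
    (hr : 0 < r) (hdvd : p ^ r ∣ q - 1) (hnd : ¬ p ^ (r + s) ∣ q - 1) :
    ∃ N : ℕ, p ^ s ∣ q ^ N - 1 ∧ ¬ p ^ (r + s) ∣ q ^ N - 1 := by
  have := Fact.mk hp
  have h1 : 1 < q := hq.one_lt
  have hpq : p ∣ q - 1 := (dvd_pow_self p hr.ne').trans hdvd
  have hnpq : ¬ p ∣ q := fun h => hp.one_lt.ne' (Nat.dvd_one.mp (by
    have := Nat.dvd_sub h hpq
    rwa [Nat.sub_sub_self h1.le] at this))
  have hq1 : q - 1 ≠ 0 := by omega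
  rw [padicValNat_dvd_iff_le hq1] at hdvd hnd
  refine ⟨p ^ (s - padicValNat p (q - 1)), ?_⟩
  have hN : p ^ (s - padicValNat p (q - 1)) ≠ 0 := pow_ne_zero _ hp.ne_zero
  have hne : q ^ p ^ (s - padicValNat p (q - 1)) - 1 ≠ 0 :=
    Nat.sub_ne_zero_of_lt (Nat.one_lt_pow hN h1)
  have hv := padicValNat.pow_sub_pow hpodd h1 hpq hnpq hN
  rw [one_pow, padicValNat.prime_pow] at hv
  rw [padicValNat_dvd_iff_le hne, padicValNat_dvd_iff_le hne, hv]
  omega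

section Residue

open NumberField IsDedekindDomain
open scoped WithZero

/-- A field automorphism stabilising a prime preserves the associated valuation. -/
theorem valuation_ringEquiv {L : Type*} [Field L] [NumberField L] (θ : L ≃+* L)
    (v : HeightOneSpectrum (𝓞 L))
    (hv : ∀ x : 𝓞 L, RingOfIntegers.mapRingEquiv θ x ∈ v.asIdeal ↔ x ∈ v.asIdeal) (x : L) :
    v.valuation L (θ x) = v.valuation L x := by
  set t : 𝓞 L ≃+* 𝓞 L := RingOfIntegers.mapRingEquiv θ with ht
  have hcomap : v.asIdeal.comap t = v.asIdeal := by ext x; exact hv x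
  have hpow : ∀ (n : ℕ) (y : 𝓞 L), t y ∈ v.asIdeal ^ n ↔ y ∈ v.asIdeal ^ n := by
    intro n y
    have hmap : v.asIdeal.map t = v.asIdeal := by
      conv_lhs => rw [← hcomap]
      exact Ideal.map_comap_of_surjective _ t.surjective _
    rw [← Ideal.mem_comap, ← Ideal.map_symm]
    have hmap' : v.asIdeal.map t.symm = v.asIdeal := by
      rw [Ideal.map_symm, hcomap]
    rw [Ideal.map_pow, hmap']
  have hint : ∀ y : 𝓞 L, v.intValuation (t y) = v.intValuation y := by
    intro y
    by_cases hy : y = 0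
    · simp [hy]
    have hty : t y ≠ 0 := by simpa using hy
    apply le_antisymm
    · rw [v.intValuation_if_neg hy, v.intValuation_le_pow_iff_mem, hpow,
        ← v.intValuation_le_pow_iff_mem, v.intValuation_if_neg hy]
    · rw [v.intValuation_if_neg hty, v.intValuation_le_pow_iff_mem, ← hpow,
        ← v.intValuation_le_pow_iff_mem, v.intValuation_if_neg hty]
  obtain ⟨y, z, hz, rfl⟩ := IsFractionRing.div_surjective (A := 𝓞 L) x
  have h : ∀ y : 𝓞 L, θ (algebraMap (𝓞 L) L y) = algebraMap (𝓞 L) L (t y) := fun y => rfl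
  rw [map_div₀, map_div₀, map_div₀, h, h]
  simp only [HeightOneSpectrum.valuation_of_algebraMap, hint]

/-- In a residue ring of `ℚ(ζ)` above `q`, the `q`-part of the root of unity `ζ` is trivial, so the
`N`-fold Frobenius (where `p ^ s ∣ q ^ N - 1`) fixes the image of `ζ`, and that image generates the ring. -/
theorem residue_pow_eq {L : Type*} [Field L] [NumberField L] {p q s N : ℕ} (hp : p.Prime)
    (hq : q.Prime) [IsCyclotomicExtension {q * p ^ s} ℚ L] {ζ : L}
    (hζ : IsPrimitiveRoot ζ (q * p ^ s)) (hN : p ^ s ∣ q ^ N - 1)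
    (Q : Ideal (𝓞 L)) [Q.IsPrime] (hqQ : (q : 𝓞 L) ∈ Q) (x : 𝓞 L ⧸ Q) : x ^ q ^ N = x := by
  have : NeZero (q * p ^ s) := ⟨mul_ne_zero hq.ne_zero (pow_ne_zero _ hp.ne_zero)⟩
  have := Fact.mk hq
  have hch : CharP (𝓞 L ⧸ Q) q := by
    rw [CharP.charP_iff_prime_eq_zero hq]
    rw [← map_natCast (Ideal.Quotient.mk Q)]
    exact Ideal.Quotient.eq_zero_iff_mem.mpr hqQ
  obtain ⟨x, rfl⟩ := Ideal.Quotient.mk_surjective x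
  have hx : x ∈ Algebra.adjoin ℤ {hζ.toInteger} := by
    rw [IsCyclotomicExtension.Rat.adjoin_singleton_eq_top hζ]; trivial
  induction hx using Algebra.adjoin_induction with
  | mem x hx =>
    obtain rfl := Set.mem_singleton_iff.mp hx
    set z := Ideal.Quotient.mk Q hζ.toInteger with hz
    -- `(z ^ p ^ s) ^ q = 1`, and Frobenius is injective on the domain `𝓞 L ⧸ Q`.
    have h1 : z ^ p ^ s = 1 := by
      apply frobenius_inj (𝓞 L ⧸ Q) q
      rw [frobenius_def, map_one, ← pow_mul, mul_comm, hz, ← map_pow,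
        hζ.toInteger_isPrimitiveRoot.pow_eq_one, map_one]
    obtain ⟨c, hc⟩ := hN
    have : q ^ N = p ^ s * c + 1 := by
      have := Nat.one_le_pow N q hq.pos
      omega
    rw [this, pow_succ, pow_mul, h1, one_pow, one_mul]
  | algebraMap m =>
    simp only [eq_intCast, map_intCast]
    rw [← iterateFrobenius_def, map_intCast]
  | add x y _ _ hx hy => rw [map_add, add_pow_char_pow, hx, hy]
  | mul x y _ _ hx hy => rw [map_mul, mul_pow, hx, hy]

/-- An automorphism fixing the `p`-power roots of unity of `ℚ(ζ)` is trivial modulo primes above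
`q`; that is, it lies in the inertia group. -/
theorem mk_mapRingEquiv_eq {L : Type*} [Field L] [NumberField L] {p q s u : ℕ} (hp : p.Prime)
    (hq : q.Prime) [IsCyclotomicExtension {q * p ^ s} ℚ L] {ζ : L}
    (hζ : IsPrimitiveRoot ζ (q * p ^ s)) (θ : L ≃+* L) (hθ : θ ζ = ζ ^ u) (hu : u ≡ 1 [MOD p ^ s])
    (Q : Ideal (𝓞 L)) [Q.IsPrime] (hqQ : (q : 𝓞 L) ∈ Q) (x : 𝓞 L) :
    Ideal.Quotient.mk Q (RingOfIntegers.mapRingEquiv θ x) = Ideal.Quotient.mk Q x := by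
  have : NeZero (q * p ^ s) := ⟨mul_ne_zero hq.ne_zero (pow_ne_zero _ hp.ne_zero)⟩
  have := Fact.mk hq
  have hch : CharP (𝓞 L ⧸ Q) q := by
    rw [CharP.charP_iff_prime_eq_zero hq]
    rw [← map_natCast (Ideal.Quotient.mk Q)]
    exact Ideal.Quotient.eq_zero_iff_mem.mpr hqQ
  have hx : x ∈ Algebra.adjoin ℤ {hζ.toInteger} := by
    rw [IsCyclotomicExtension.Rat.adjoin_singleton_eq_top hζ]; trivial
  induction hx using Algebra.adjoin_induction with
  | mem x hx =>
    obtain rfl := Set.mem_singleton_iff.mp hx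
    have h0 : RingOfIntegers.mapRingEquiv θ hζ.toInteger = hζ.toInteger ^ u := by
      apply RingOfIntegers.coe_injective
      rw [map_pow]
      exact hθ
    rw [h0, map_pow]
    set z := Ideal.Quotient.mk Q hζ.toInteger with hz
    -- `(z ^ p ^ s) ^ q = 1`, and Frobenius is injective on the domain `𝓞 L ⧸ Q`.
    have h1 : z ^ p ^ s = 1 := by
      apply frobenius_inj (𝓞 L ⧸ Q) q
      rw [frobenius_def, map_one, ← pow_mul, mul_comm, hz, ← map_pow,
        hζ.toInteger_isPrimitiveRoot.pow_eq_one, map_one]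
    rw [pow_eq_pow_mod u h1, hu, ← pow_eq_pow_mod 1 h1, pow_one]
  | algebraMap m => simp
  | add x y _ _ hx hy => simp only [map_add, hx, hy]
  | mul x y _ _ hx hy => simp only [map_mul, hx, hy]

/-- Over `ℚ(ζ)`, a power `μ ^ k` of a primitive `p ^ s`-th root of unity which is a twisted product of
length `p ^ r` has `p ∣ k`. Otherwise a residue field above `q` would contain an element of order
`p ^ (r + s)`, namely the residue of `α`. -/
theorem dvd_of_prod_eq_pow {L : Type*} [Field L] [NumberField L] {p q s N r u k : ℕ} (hp : p.Prime)
    (hq : q.Prime) (hpq : p ≠ q) (hs : 0 < s)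
    [IsCyclotomicExtension {q * p ^ s} ℚ L] {ζ : L}
    (hζ : IsPrimitiveRoot ζ (q * p ^ s)) (hN : p ^ s ∣ q ^ N - 1) (hN' : ¬ p ^ (r + s) ∣ q ^ N - 1)
    (θ : L ≃+* L) (hθ : θ ζ = ζ ^ u) (hu : u ≡ 1 [MOD p ^ s]) {μ : L} (hμ : IsPrimitiveRoot μ (p ^ s))
    {α : L} (hα : ∏ i ∈ range (p ^ r), θ^[i] α = μ ^ k) : p ∣ k := by
  by_contra hpk
  have hμk : IsPrimitiveRoot (μ ^ k) (p ^ s) :=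
    hμ.pow_of_coprime k ((hp.coprime_iff_not_dvd.mpr hpk).symm.pow_right s)
  have : NeZero (p ^ s) := ⟨pow_ne_zero _ hp.ne_zero⟩
  have := Fact.mk hq
  have : (Ideal.span {(q : ℤ)}).IsMaximal :=
    PrincipalIdealRing.isMaximal_of_irreducible (Nat.prime_iff_prime_int.mp hq).irreducible
  obtain ⟨Q, hQm, hQq⟩ := Ideal.exists_maximal_ideal_liesOver_of_isIntegral
    (S := 𝓞 L) (Ideal.span {(q : ℤ)})
  have hqQ : (q : 𝓞 L) ∈ Q := by
    have h := (Ideal.mem_of_liesOver Q (Ideal.span {(q : ℤ)}) (q : ℤ)).mp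
      (Ideal.mem_span_singleton_self _)
    simpa using h
  have hQ0 : Q ≠ ⊥ := by
    rintro rfl
    exact hq.ne_zero (by simpa using hqQ)
  have hnorm : (Ideal.absNorm Q).Coprime (p ^ s) := by
    have h : Ideal.absNorm Q ∣ q ^ Module.finrank ℤ (𝓞 L) := by
      rw [← Ideal.absNorm_span_natCast]
      exact Ideal.absNorm_dvd_absNorm_of_le (by simpa [Ideal.span_le] using hqQ)
    exact Nat.Coprime.of_dvd_left h
      (((Nat.coprime_primes hq hp).mpr hpq.symm).pow _ _)
  let v : HeightOneSpectrum (𝓞 L) := ⟨Q, hQm.isPrime, hQ0⟩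
  have hmk := mk_mapRingEquiv_eq hp hq hζ θ hθ hu Q hqQ
  have hv : ∀ x : L, v.valuation L (θ x) = v.valuation L x := valuation_ringEquiv θ v fun x => by
    change _ ∈ Q ↔ _ ∈ Q
    rw [← Ideal.Quotient.eq_zero_iff_mem, hmk, Ideal.Quotient.eq_zero_iff_mem]
  have hv' : ∀ (i : ℕ) (x : L), v.valuation L (θ^[i] x) = v.valuation L x := by
    intro i x
    induction i with
    | zero => rfl
    | succ i ih => rw [Function.iterate_succ_apply', hv, ih]
  have hα1 : v.valuation L α = 1 := by
    have h := congrArg (v.valuation L) hα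
    have h1 : v.valuation L (μ ^ k) = 1 := by
      have := congrArg (v.valuation L) hμk.pow_eq_one
      rw [map_pow, map_one] at this
      exact (pow_eq_one_iff_left (NeZero.ne (p ^ s))).mp this
    rw [map_prod, h1] at h
    simp only [hv', prod_const, card_range] at h
    exact (pow_eq_one_iff_left (pow_ne_zero _ hp.ne_zero)).mp h
  -- A `Q`-integral `α` is a fraction `y / d` of algebraic integers with `d ∉ Q`.
  obtain ⟨y, d, hyd⟩ := v.exists_primeCompl_mul_eq_of_integer α hα1.le
  set t : 𝓞 L ≃+* 𝓞 L := RingOfIntegers.mapRingEquiv θ with ht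
  have hti : ∀ (i : ℕ) (x : 𝓞 L), θ^[i] (algebraMap (𝓞 L) L x) = algebraMap (𝓞 L) L (t^[i] x) := by
    intro i x
    induction i with
    | zero => rfl
    | succ i ih => rw [Function.iterate_succ_apply', ih, Function.iterate_succ_apply']; rfl
  have hmki : ∀ (i : ℕ) (x : 𝓞 L), Ideal.Quotient.mk Q (t^[i] x) = Ideal.Quotient.mk Q x := by
    intro i x
    induction i with
    | zero => rfl
    | succ i ih => rw [Function.iterate_succ_apply', hmk, ih]
  have hint : IsPrimitiveRoot hμk.toInteger (p ^ s) := hμk.toInteger_isPrimitiveRoot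
  have hprod : ∏ i ∈ range (p ^ r), t^[i] y =
      hμk.toInteger * ∏ i ∈ range (p ^ r), t^[i] (d : 𝓞 L) := by
    apply RingOfIntegers.coe_injective
    rw [map_prod, map_mul, map_prod]
    simp only [← hti, ← hyd, iterate_map_mul, prod_mul_distrib, hα]
    rfl
  have hbar := congrArg (Ideal.Quotient.mk Q) hprod
  simp only [map_mul, map_prod, hmki, prod_const, card_range] at hbar
  let _ := Ideal.Quotient.field Q
  have hz : IsPrimitiveRoot (Ideal.Quotient.mk Q hμk.toInteger) (p ^ s) :=
    hint.idealQuotient_mk (by rw [Ne, Ideal.absNorm_eq_one_iff]; exact hQm.ne_top) hnorm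
  have hd0 : Ideal.Quotient.mk Q (d : 𝓞 L) ≠ 0 := by
    rw [Ne, Ideal.Quotient.eq_zero_iff_mem]; exact d.2
  set ω := Ideal.Quotient.mk Q y / Ideal.Quotient.mk Q (d : 𝓞 L) with hω
  have hωp : ω ^ p ^ r = Ideal.Quotient.mk Q hμk.toInteger := by
    rw [hω, div_pow, hbar, mul_div_cancel_right₀ _ (pow_ne_zero _ hd0)]
  have hω0 : ω ≠ 0 := by
    intro h
    rw [h, zero_pow (pow_ne_zero _ hp.ne_zero)] at hωp
    exact hz.ne_zero (NeZero.ne (p ^ s)) hωp.symm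
  have hord : orderOf ω = p ^ (r + s) := by
    have := Fact.mk hp
    obtain ⟨s, rfl⟩ := Nat.exists_eq_succ_of_ne_zero hs.ne'
    rw [Nat.succ_eq_add_one, ← add_assoc]
    apply orderOf_eq_prime_pow
    · intro h
      rw [pow_add, pow_mul, hωp, hz.pow_eq_one_iff_dvd] at h
      exact absurd h (Nat.not_dvd_of_pos_of_lt (pow_pos hp.pos _)
        (Nat.pow_lt_pow_right hp.one_lt (Nat.lt_succ_self s)))
    · rw [add_assoc, pow_add, pow_mul, hωp]
      exact hz.pow_eq_one
  apply hN'
  rw [← hord]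
  apply orderOf_dvd_of_pow_eq_one
  have h := residue_pow_eq hp hq hζ hN Q hqQ ω
  have h1 := Nat.one_le_pow N q hq.pos
  apply mul_right_cancel₀ hω0
  rw [← pow_succ, Nat.sub_add_cancel h1, h, one_mul]

end Residue

/-! ### Eigenspaces of rational matrices -/

section Eigenspace

open scoped Matrix

/-- The nullity of a matrix is invariant under field extension, because the rank normal form is. -/
theorem finrank_ker_toLin'_map {K K' : Type*} [Field K] [Field K'] {d : ℕ} (f : K →+* K')
    (M : Matrix (Fin d) (Fin d) K) :
    Module.finrank K' (LinearMap.ker (Matrix.toLin' (M.map f))) =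
      Module.finrank K (LinearMap.ker (Matrix.toLin' M)) := by
  have hrank : (M.map f).rank = M.rank := by
    classical
    obtain ⟨V, U, e, hV, hU, h⟩ := M.exists_rank_normal_form
    have h' : V.map f * M.map f * U.map f =
        ((Matrix.fromBlocks 1 0 0 0).submatrix e e : Matrix (Fin d) (Fin d) K') := by
      rw [← Matrix.map_mul, ← Matrix.map_mul, h]
      ext i j
      simp only [Matrix.map_apply, Matrix.submatrix_apply]
      rcases e i with x | x <;> rcases e j with y | y <;> simp [Matrix.one_apply, apply_ite f]
    have hV' : IsUnit (V.map f) := hV.map f.mapMatrix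
    have hU' : IsUnit (U.map f) := hU.map f.mapMatrix
    have h1 : (V.map f * M.map f * U.map f).rank = (M.map f).rank := by
      rw [Matrix.rank_mul_eq_left_of_isUnit_det _ _ ((Matrix.isUnit_iff_isUnit_det _).mp hU'),
        Matrix.rank_mul_eq_right_of_isUnit_det _ _ ((Matrix.isUnit_iff_isUnit_det _).mp hV')]
    rw [← h1, h', Matrix.rank_submatrix, ← Matrix.diagonal_one, ← Matrix.diagonal_zero,
      Matrix.fromBlocks_diagonal, Matrix.rank_diagonal, Fintype.card_congr Equiv.subtypeSum]
    simp
  have h1 := LinearMap.finrank_range_add_finrank_ker (Matrix.toLin' (M.map f))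
  have h2 := LinearMap.finrank_range_add_finrank_ker (Matrix.toLin' M)
  simp only [Module.finrank_fintype_fun_eq_card] at h1 h2
  have h3 : Module.finrank K' (LinearMap.range (Matrix.toLin' (M.map f))) = (M.map f).rank := rfl
  have h4 : Module.finrank K (LinearMap.range (Matrix.toLin' M)) = M.rank := rfl
  omega

theorem finrank_eigenspace_toLin'_map {K K' : Type*} [Field K] [Field K'] {d : ℕ} (f : K →+* K')
    (M : Matrix (Fin d) (Fin d) K) (x : K) :
    Module.finrank K' (Module.End.eigenspace (Matrix.toLin' (M.map f)) (f x)) =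
      Module.finrank K (Module.End.eigenspace (Matrix.toLin' M) x) := by
  have h := finrank_ker_toLin'_map f (M - x • (1 : Matrix _ _ K))
  have h1 : (M - x • (1 : Matrix (Fin d) (Fin d) K)).map f =
      M.map f - f x • (1 : Matrix (Fin d) (Fin d) K') := by
    ext i j
    simp [Matrix.one_apply, apply_ite f]
  rw [h1] at h
  rw [Module.End.eigenspace_def, Module.End.eigenspace_def, Module.End.one_eq_id,
    Module.End.one_eq_id, ← Matrix.toLin'_one, ← Matrix.toLin'_one, ← map_smul, ← map_smul,
    ← map_sub, ← map_sub]
  exact h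

/-- If `B C = C ^ u B` for rational matrices, then `x ↦ B (θ x)` is a `θ`-semilinear operator on the
`ζ`-eigenspace of `C` over `L`, and `B ^ m = C ^ w` makes its `m`-th iterate the scalar `ζ ^ w`. -/
theorem exists_norm_of_matrix {L : Type*} [Field L] [Algebra ℚ L] (θ : L ≃+* L) {d m u u' w M : ℕ}
    {ζ : L} (hθ : θ ζ = ζ ^ u) (hθm : ∀ x, θ^[m] x = x) (hζ : ζ ^ M = 1) (huu' : u * u' ≡ 1 [MOD M])
    (B C : Matrix (Fin d) (Fin d) ℚ) (hC : C ^ M = 1) (hBC : B * C = C ^ u * B)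
    (hB : B ^ m = C ^ w) :
    ∃ α : L, ∏ i ∈ range m, θ^[i] α = (ζ ^ w) ^ Module.finrank L
      (Module.End.eigenspace (Matrix.toLin' (C.map (algebraMap ℚ L))) ζ) := by
  set f := algebraMap ℚ L with hf
  set E := Module.End.eigenspace (Matrix.toLin' (C.map f)) ζ with hE
  have hmap : ∀ (A : Matrix (Fin d) (Fin d) ℚ) (k : ℕ), (A ^ k).map f = A.map f ^ k := fun A k =>
    map_pow f.mapMatrix A k
  have hmem : ∀ x, x ∈ E ↔ C.map f *ᵥ x = ζ • x := fun x => by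
    rw [hE, Module.End.mem_eigenspace_iff, Matrix.toLin'_apply]
  have hpow : ∀ (A : Matrix (Fin d) (Fin d) L) (z : L) (x : Fin d → L), A *ᵥ x = z • x →
      ∀ k : ℕ, (A ^ k) *ᵥ x = z ^ k • x := by
    intro A z x h k
    induction k with
    | zero => simp
    | succ k ih => rw [pow_succ, ← Matrix.mulVec_mulVec, h, Matrix.mulVec_smul, ih, smul_smul,
        pow_succ, mul_comm]
  have hθv : ∀ (A : Matrix (Fin d) (Fin d) ℚ) (x : Fin d → L),
      (θ ∘ (A.map f *ᵥ x)) = A.map f *ᵥ (θ ∘ x) := by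
    intro A x
    ext i
    simp only [Function.comp_apply, Matrix.mulVec, dotProduct, Matrix.map_apply, map_sum, map_mul]
    refine sum_congr rfl fun k _ => ?_
    congr 1
    exact RingHom.congr_fun (RingHom.ext_rat ((θ : L →+* L).comp f) f) _
  let T₀ : (Fin d → L) → (Fin d → L) := fun x => B.map f *ᵥ (θ ∘ x)
  have hT₀ : ∀ x ∈ E, T₀ x ∈ E := by
    intro x hx
    rw [hmem] at hx ⊢
    have h1 : C.map f *ᵥ (θ ∘ x) = ζ ^ u • (θ ∘ x) := by
      rw [← hθv, hx]
      ext i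
      simp [hθ]
    -- `C ^ u` acts as `ζ ^ u` on the image, and `u` is invertible modulo `M`.
    have h2 : (C.map f ^ u) *ᵥ T₀ x = ζ ^ u • T₀ x := by
      simp only [T₀]
      rw [Matrix.mulVec_mulVec, ← hmap, ← Matrix.map_mul, ← hBC, Matrix.map_mul,
        ← Matrix.mulVec_mulVec, h1, Matrix.mulVec_smul]
    have h3 := hpow _ _ _ h2 u'
    have hC1 : C ^ (u * u') = C := by
      rw [pow_eq_pow_mod _ hC, huu', ← pow_eq_pow_mod _ hC, pow_one]
    have hζ1 : ζ ^ (u * u') = ζ := by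
      rw [pow_eq_pow_mod _ hζ, huu', ← pow_eq_pow_mod _ hζ, pow_one]
    rwa [← pow_mul, ← pow_mul, ← hmap, hC1, hζ1] at h3
  let T : E →ₛₗ[(θ : L →+* L)] E :=
    { toFun := fun x => ⟨T₀ x, hT₀ x x.2⟩
      map_add' := fun x y => by
        apply Subtype.ext
        simp only [T₀, Submodule.coe_add]
        rw [← Matrix.mulVec_add]
        congr 1
        ext i
        simp
      map_smul' := fun c x => by
        apply Subtype.ext
        simp only [T₀, Submodule.coe_smul]
        rw [← Matrix.mulVec_smul]
        congr 1
        ext i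
        simp }
  have hTk : ∀ (k : ℕ) (x : E), ((T^[k] x : E) : Fin d → L) = (B ^ k).map f *ᵥ (θ^[k] ∘ x) := by
    intro k x
    induction k with
    | zero => simp
    | succ k ih =>
      rw [Function.iterate_succ_apply']
      change B.map f *ᵥ (θ ∘ ((T^[k] x : E) : Fin d → L)) = _
      rw [ih, hθv, Matrix.mulVec_mulVec, ← Matrix.map_mul, ← pow_succ']
      congr 1
      ext i
      simp only [Function.comp_apply, Function.iterate_succ_apply']
  refine exists_norm_of_semilinear (θ : L →+* L) T m (ζ ^ w) fun x => ?_
  apply Subtype.ext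
  rw [hTk, hB, hmap, Submodule.coe_smul, ← hpow _ _ _ ((hmem x).mp x.2) w]
  congr 1
  ext i
  simp [hθm]

end Eigenspace

/-- The arithmetic core of the result: for rational matrices `B`, `C` satisfying the relations of `b`
and `d = a * b ^ (p ^ r)`, the multiplicity of the eigenvalue `ξ` of `C` is divisible by `p`. -/
theorem dvd_finrank_eigenspace {p q r s j u w d : ℕ} (hp : p.Prime) (hq : q.Prime)
    (hpodd : Odd p) (hpq : p ≠ q) (hr : 0 < r) (hs : 0 < s) (hdvd : p ^ r ∣ q - 1)
    (hnd : ¬ p ^ (r + s) ∣ q - 1) (hj : orderOf (j : ZMod q) = p ^ r) (huq : u ≡ j [MOD q])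
    (hus : u ≡ 1 [MOD p ^ s]) {ξ : ℂ} (hξ : IsPrimitiveRoot ξ (q * p ^ s))
    (B C : Matrix (Fin d) (Fin d) ℚ) (hC : C ^ (q * p ^ s) = 1) (hBC : B * C = C ^ u * B)
    (hB : B ^ p ^ r = C ^ w) (hw : IsPrimitiveRoot (ξ ^ w) (p ^ s)) :
    p ∣ Module.finrank ℂ
      (Module.End.eigenspace (Matrix.toLin' (C.map (algebraMap ℚ ℂ))) ξ) := by
  have hcop : q.Coprime (p ^ s) := ((Nat.coprime_primes hq hp).mpr hpq.symm).pow_right s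
  have hM : NeZero (q * p ^ s) := ⟨mul_ne_zero hq.ne_zero (pow_ne_zero _ hp.ne_zero)⟩
  have : NeZero (p ^ s) := ⟨pow_ne_zero _ hp.ne_zero⟩
  have hum : u ^ p ^ r ≡ 1 [MOD q * p ^ s] := by
    rw [← Nat.modEq_and_modEq_iff_modEq_mul hcop]
    refine ⟨(huq.pow _).trans ?_, by simpa using hus.pow (p ^ r)⟩
    rw [← ZMod.natCast_eq_natCast_iff, Nat.cast_pow, ← hj, pow_orderOf_eq_one, Nat.cast_one]
  obtain ⟨t, ht⟩ : ∃ t, p ^ r = t + 1 := ⟨p ^ r - 1, (Nat.sub_add_cancel (pow_pos hp.pos r)).symm⟩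
  have huu' : u * u ^ t ≡ 1 [MOD q * p ^ s] := by rwa [← pow_succ', ← ht]
  let L := IntermediateField.adjoin ℚ {ξ}
  have hcyc : IsCyclotomicExtension {q * p ^ s} ℚ L := by
    change IsCyclotomicExtension {q * p ^ s} ℚ (IntermediateField.adjoin ℚ {ξ}).toSubalgebra
    rw [IntermediateField.adjoin_simple_toSubalgebra_of_isAlgebraic
      ((hξ.isIntegral (NeZero.pos _)).tower_top (A := ℚ)).isAlgebraic]
    exact hξ.adjoin_isCyclotomicExtension ℚ
  have : NumberField L := IsCyclotomicExtension.numberField {q * p ^ s} ℚ L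
  let ζ : L := IntermediateField.AdjoinSimple.gen ℚ ξ
  have hζξ : algebraMap L ℂ ζ = ξ := IntermediateField.AdjoinSimple.algebraMap_gen ℚ ξ
  have hζ : IsPrimitiveRoot ζ (q * p ^ s) := by
    rw [← hζξ] at hξ
    exact hξ.of_map_of_injective (algebraMap L ℂ).injective
  have hζw : IsPrimitiveRoot (ζ ^ w) (p ^ s) := by
    rw [← hζξ, ← map_pow] at hw
    exact hw.of_map_of_injective (algebraMap L ℂ).injective
  have hirr : Irreducible (Polynomial.cyclotomic (q * p ^ s) ℚ) :=
    Polynomial.cyclotomic.irreducible_rat (NeZero.pos _)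
  obtain ⟨θ, hθ⟩ : ∃ θ : L ≃ₐ[ℚ] L, θ ζ = ζ ^ u := by
    have hμ : IsPrimitiveRoot (ζ ^ u) (q * p ^ s) :=
      hζ.pow_of_coprime u (Nat.coprime_of_mul_modEq_one _ huu')
    have hmin : minpoly ℚ (hζ.powerBasis ℚ).gen = minpoly ℚ (hμ.powerBasis ℚ).gen := by
      rw [hζ.powerBasis_gen ℚ, hμ.powerBasis_gen ℚ,
        ← hζ.minpoly_eq_cyclotomic_of_irreducible hirr,
        ← hμ.minpoly_eq_cyclotomic_of_irreducible hirr]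
    refine ⟨(hζ.powerBasis ℚ).equivOfMinpoly (hμ.powerBasis ℚ) hmin, ?_⟩
    exact (congrArg _ (hζ.powerBasis_gen ℚ).symm).trans
      (((hζ.powerBasis ℚ).equivOfMinpoly_gen (hμ.powerBasis ℚ) hmin).trans (hμ.powerBasis_gen ℚ))
  have hθk : ∀ k : ℕ, (θ ^ k) ζ = ζ ^ u ^ k := by
    intro k
    induction k with
    | zero => simp
    | succ k ih => rw [pow_succ, AlgEquiv.mul_apply, hθ, map_pow, ih, ← pow_mul, pow_succ]
  have hθm : ∀ x, θ^[p ^ r] x = x := by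
    have h1 : ((θ ^ p ^ r : L ≃ₐ[ℚ] L) : L →ₐ[ℚ] L) = AlgHom.id ℚ L := by
      apply (hζ.powerBasis ℚ).algHom_ext
      rw [hζ.powerBasis_gen ℚ]
      change (θ ^ p ^ r) ζ = ζ
      rw [hθk, pow_eq_pow_mod _ hζ.pow_eq_one, hum, ← pow_eq_pow_mod _ hζ.pow_eq_one, pow_one]
    intro x
    have h2 : ∀ k : ℕ, (θ ^ k) x = θ^[k] x := by
      intro k
      induction k with
      | zero => rfl
      | succ k ih => rw [pow_succ', AlgEquiv.mul_apply, ih, Function.iterate_succ_apply']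
    rw [← h2]
    exact AlgHom.congr_fun h1 x
  obtain ⟨α, hα⟩ := exists_norm_of_matrix (θ : L ≃+* L) (hθ : (θ : L ≃+* L) ζ = ζ ^ u) hθm
    hζ.pow_eq_one huu' B C hC hBC hB
  obtain ⟨N, hN, hN'⟩ := exists_frobenius_exponent hp hq hpodd hr hdvd hnd
  have hmain := dvd_of_prod_eq_pow hp hq hpq hs hζ hN hN' (θ : L ≃+* L)
    (hθ : (θ : L ≃+* L) ζ = ζ ^ u) hus hζw hα
  rw [← finrank_eigenspace_toLin'_map (algebraMap L ℂ), hζξ] at hmain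
  have hCC : (C.map (algebraMap ℚ L)).map (algebraMap L ℂ) = C.map (algebraMap ℚ ℂ) := by
    ext i k
    simp
  rwa [hCC] at hmain

/-! ### The structure of a faithful irreducible representation -/

/-- In a finite group, closure under inverses need not be checked. -/
theorem forall_of_closure {G : Type*} [Group G] [Finite G] {a b : G}
    (hgen : Subgroup.closure {a, b} = ⊤) (P : G → Prop) (h1 : P 1) (ha : P a) (hb : P b)
    (hmul : ∀ x y, P x → P y → P (x * y)) (g : G) : P g := by
  have hg : g ∈ Subgroup.closure {a, b} := hgen ▸ Subgroup.mem_top g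
  induction hg using Subgroup.closure_induction with
  | mem x hx => rcases hx with rfl | rfl <;> assumption
  | one => exact h1
  | mul x y _ _ hx hy => exact hmul x y hx hy
  | inv x _ hx =>
    have hpow : ∀ k : ℕ, P (x ^ k) := by
      intro k
      induction k with
      | zero => simpa using h1
      | succ k ih => rw [pow_succ]; exact hmul _ _ ih hx
    have : x⁻¹ = x ^ (orderOf x - 1) := by
      rw [inv_eq_iff_mul_eq_one, mul_pow_sub_one (orderOf_pos x).ne', pow_orderOf_eq_one]
    rw [this]
    exact hpow _

theorem conj_pow_eq {G : Type*} [Group G] {a b : G} {j : ℕ} (hba : b * a * b⁻¹ = a ^ j) (i : ℕ) :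
    b ^ i * a * (b ^ i)⁻¹ = a ^ j ^ i := by
  induction i with
  | zero => simp
  | succ i ih =>
    have : b ^ (i + 1) * a * (b ^ (i + 1))⁻¹ = b ^ i * (b * a * b⁻¹) * (b ^ i)⁻¹ := by
      rw [pow_succ]; group
    rw [this, hba, ← conj_pow, ih, ← pow_mul, pow_succ]

theorem commute_of_orderOf {G : Type*} [Group G] {a b : G} {j q m : ℕ} (ha : orderOf a = q)
    (hba : b * a * b⁻¹ = a ^ j) (hj : orderOf (j : ZMod q) = m) : Commute (b ^ m) a := by
  have h := conj_pow_eq hba m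
  have h1 : a ^ j ^ m = a ^ 1 := by
    rw [pow_eq_pow_iff_modEq, ha, ← ZMod.natCast_eq_natCast_iff]
    rw [Nat.cast_pow, ← hj, pow_orderOf_eq_one, Nat.cast_one]
  rw [h1, pow_one, mul_inv_eq_iff_eq_mul] at h
  exact h

/-- In a faithful irreducible representation a central element `c` acts as a primitive root of unity
(Schur), and an element `a` of prime order has an eigenvalue other than `1`. -/
theorem exists_eigenvector {G V : Type*} [Group G] [Finite G] [AddCommGroup V] [Module ℂ V]
    [FiniteDimensional ℂ V] [Nontrivial V] (ρ : Representation ℂ G V)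
    (hinj : Function.Injective ρ)
    (hirr : ∀ S : Submodule ℂ V, (∀ g, ∀ x ∈ S, ρ g x ∈ S) → S = ⊥ ∨ S = ⊤)
    {a c : G} {q t : ℕ} (hq : q.Prime) (ha : orderOf a = q) (hc : orderOf c = t)
    (hcomm : ∀ g, Commute c g) :
    ∃ (μ ν : ℂ) (v : V), v ≠ 0 ∧ ρ a v = μ • v ∧ (∀ x, ρ c x = ν • x) ∧
      IsPrimitiveRoot μ q ∧ IsPrimitiveRoot ν t := by
  obtain ⟨ν, hν⟩ := Module.End.exists_eigenvalue (ρ c)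
  have hcν : ∀ x, ρ c x = ν • x := by
    have htop : Module.End.eigenspace (ρ c) ν = ⊤ := by
      refine (hirr _ fun g x hx => ?_).resolve_left hν
      rw [Module.End.mem_eigenspace_iff] at hx ⊢
      rw [← Module.End.mul_apply, ← map_mul, (hcomm g).eq, map_mul, Module.End.mul_apply, hx,
        map_smul]
    intro x
    exact Module.End.mem_eigenspace_iff.mp (htop ▸ Submodule.mem_top)
  have hapow : ∀ k : ℕ, ρ (a ^ k) = ρ a ^ k := fun k => map_pow ρ a k
  obtain ⟨x, hx⟩ : ∃ x, ρ a x ≠ x := by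
    by_contra! h
    have : ρ a = ρ 1 := by ext x; simp [h]
    rw [hinj this, orderOf_one] at ha
    exact hq.one_lt.ne ha
  -- The range of `ρ a - 1` is a nonzero `a`-stable subspace without nonzero `a`-fixed vectors.
  let R : Submodule ℂ V := LinearMap.range (ρ a - 1)
  have hR : ∀ y ∈ R, ρ a y ∈ R := by
    rintro _ ⟨z, rfl⟩
    exact ⟨ρ a z, by simp⟩
  have : Nontrivial R := by
    rw [Submodule.nontrivial_iff_ne_bot, Submodule.ne_bot_iff]
    exact ⟨ρ a x - x, ⟨x, by simp⟩, sub_ne_zero.mpr hx⟩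
  obtain ⟨μ, hμ⟩ := Module.End.exists_eigenvalue ((ρ a).restrict hR)
  obtain ⟨⟨v, hvR⟩, hv, hv0⟩ := hμ.exists_hasEigenvector
  rw [Module.End.mem_eigenspace_iff] at hv
  have hv' : ρ a v = μ • v := congrArg Subtype.val hv
  have hv0' : v ≠ 0 := fun h => hv0 (Subtype.ext h)
  have hpow : ∀ k : ℕ, ρ (a ^ k) v = μ ^ k • v := by
    intro k
    induction k with
    | zero => simp
    | succ k ih => rw [pow_succ, map_mul, Module.End.mul_apply, hv', map_smul, ih, smul_smul,
        pow_succ, mul_comm]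
  have hμq : μ ^ q = 1 := by
    have h := hpow q
    rw [← ha, pow_orderOf_eq_one, map_one, Module.End.one_apply] at h
    rw [← ha]
    exact smul_left_injective ℂ hv0' (by simpa using h.symm)
  have hμ1 : μ ≠ 1 := by
    rintro rfl
    obtain ⟨z, hz⟩ := hvR
    have hz' : ρ a z = z + v := by
      rw [← hz]; simp
    have hiter : ∀ k : ℕ, ρ (a ^ k) z = z + (k : ℂ) • v := by
      intro k
      induction k with
      | zero => simp
      | succ k ih =>
        rw [pow_succ', map_mul, Module.End.mul_apply, ih, map_add, hz', map_smul, hv']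
        push_cast
        module
    have h := hiter q
    rw [← ha, pow_orderOf_eq_one, map_one, Module.End.one_apply, left_eq_add, smul_eq_zero] at h
    rcases h with h | h
    · rw [ha] at h
      exact hq.ne_zero (by exact_mod_cast h)
    · exact hv0' h
  have := Fact.mk hq
  refine ⟨μ, ν, v, hv0', hv', hcν, ?_, ?_⟩
  · rw [IsPrimitiveRoot.iff_orderOf]
    exact orderOf_eq_prime hμq hμ1
  · have hcpow : ∀ (k : ℕ) (x : V), ρ (c ^ k) x = ν ^ k • x := by
      intro k x
      induction k with
      | zero => simp
      | succ k ih => rw [pow_succ, map_mul, Module.End.mul_apply, hcν, map_smul, ih, smul_smul,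
          pow_succ, mul_comm]
    have key : ∀ k : ℕ, ν ^ k = 1 ↔ c ^ k = 1 := by
      intro k
      constructor
      · intro h
        apply hinj
        ext x
        rw [hcpow, h, map_one, one_smul, Module.End.one_apply]
      · intro h
        have h' := hcpow k v
        rw [h, map_one, Module.End.one_apply] at h'
        exact smul_left_injective ℂ hv0' (by simpa using h'.symm)
    refine ⟨(key t).mpr (hc ▸ pow_orderOf_eq_one c), fun l hl => ?_⟩
    rw [← hc]
    exact orderOf_dvd_of_pow_eq_one ((key l).mp hl)

theorem rep_pow_apply {G V : Type*} [Group G] [AddCommGroup V] [Module ℂ V]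
    (ρ : Representation ℂ G V) {g : G} {μ : ℂ} {v : V} (h : ρ g v = μ • v) (k : ℕ) :
    ρ (g ^ k) v = μ ^ k • v := by
  induction k with
  | zero => simp
  | succ k ih => rw [pow_succ, map_mul, Module.End.mul_apply, h, map_smul, ih, smul_smul,
          pow_succ, mul_comm]

/-- The `b⁻¹`-translates of an eigenvector of `a` are again eigenvectors of `a`. -/
theorem rep_translate_apply {G U : Type*} [Group G] [AddCommGroup U] [Module ℂ U]
    (κ : Representation ℂ G U) {a b : G} {j : ℕ} (hba : b * a * b⁻¹ = a ^ j) {μ : ℂ} {u : U}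
    (hu : κ a u = μ • u) (i : ℕ) : κ a (κ (b⁻¹ ^ i) u) = μ ^ j ^ i • κ (b⁻¹ ^ i) u := by
  have hab : a * b⁻¹ ^ i = b⁻¹ ^ i * a ^ j ^ i := by
    rw [← conj_pow_eq hba i, inv_pow]
    group
  rw [← Module.End.mul_apply, ← map_mul, hab, map_mul, Module.End.mul_apply,
    rep_pow_apply κ hu, map_smul]

theorem rep_inv_pow_apply {G U : Type*} [Group G] [AddCommGroup U] [Module ℂ U]
    (κ : Representation ℂ G U) {b : G} {m : ℕ} {ν : ℂ} (hν : ν ≠ 0) {u : U}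
    (hu : κ (b ^ m) u = ν • u) : κ (b⁻¹ ^ m) u = ν⁻¹ • u := by
  rw [eq_inv_smul_iff₀ hν, ← map_smul, ← hu, ← Module.End.mul_apply, ← map_mul, inv_pow,
    inv_mul_cancel, map_one, Module.End.one_apply]

theorem rep_pow_succ_apply {G U : Type*} [Group G] [AddCommGroup U] [Module ℂ U]
    (κ : Representation ℂ G U) (b : G) (u : U) (i : ℕ) :
    κ b (κ (b ^ i) u) = κ (b ^ (i + 1)) u := by
  rw [pow_succ', map_mul, Module.End.mul_apply]

/-- Intertwining maps out of an irreducible `ρ` correspond to `ξ`-eigenvectors of `d = a * b ^ m`, by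
evaluation at the eigenvector `v`. The vectors `b⁻¹ ^ i • v` for `i < m` are a basis of `ρ` since they
belong to distinct eigenvalues `μ ^ j ^ i` of `a` and span a subrepresentation. As `a` and `b ^ m` are
powers of `d`, an eigenvector of `d` satisfies the relations of `v`, so it is the image of `v` under
a unique intertwining map. -/
theorem finrank_intertwiningMap {G V W : Type*} [Group G] [Finite G]
    [AddCommGroup V] [Module ℂ V] [FiniteDimensional ℂ V]
    [AddCommGroup W] [Module ℂ W] [FiniteDimensional ℂ W]
    (ρ : Representation ℂ G V) (σ : Representation ℂ G W)
    (hirr : ∀ S : Submodule ℂ V, (∀ g, ∀ x ∈ S, ρ g x ∈ S) → S = ⊥ ∨ S = ⊤)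
    {a b : G} {j q m : ℕ} (hq : q.Prime) (ha : orderOf a = q)
    (hba : b * a * b⁻¹ = a ^ j) (hj : orderOf (j : ZMod q) = m) (hm : 0 < m)
    (hgen : Subgroup.closure {a, b} = ⊤)
    {μ ν ξ : ℂ} {v : V} (hv0 : v ≠ 0) (hav : ρ a v = μ • v) (hcv : ρ (b ^ m) v = ν • v)
    (hμ : IsPrimitiveRoot μ q) (hν : ν ≠ 0) {d : G} {e₁ e₂ : ℕ}
    (hd : d = a * b ^ m) (hξ : ξ = μ * ν)
    (he₁ : d ^ e₁ = a) (he₂ : d ^ e₂ = b ^ m) (hξ₁ : ξ ^ e₁ = μ) (hξ₂ : ξ ^ e₂ = ν) :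
    Module.finrank ℂ (Representation.IntertwiningMap ρ σ) =
      Module.finrank ℂ (Module.End.eigenspace (σ d) ξ) := by
  have hgen' : Subgroup.closure {a, b⁻¹} = ⊤ := by
    rw [eq_top_iff, ← hgen, Subgroup.closure_le]
    rintro x (rfl | rfl)
    · exact Subgroup.subset_closure (by simp)
    · rw [SetLike.mem_coe, ← inv_mem_iff]
      exact Subgroup.subset_closure (by simp)
  let vv : Fin m → V := fun i => ρ (b⁻¹ ^ (i : ℕ)) v
  have hvv0 : ∀ i, vv i ≠ 0 := by
    intro i h
    apply hv0
    have := congrArg (ρ (b⁻¹ ^ (i : ℕ))⁻¹) h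
    simp only [vv] at this
    rwa [← Module.End.mul_apply, ← map_mul, inv_mul_cancel, map_one, Module.End.one_apply,
      map_zero] at this
  have hlin : LinearIndependent ℂ vv := by
    refine Module.End.eigenvectors_linearIndependent' (ρ a) (fun i : Fin m => μ ^ j ^ (i : ℕ)) ?_ vv
      fun i => ⟨Module.End.mem_eigenspace_iff.mpr (rep_translate_apply ρ hba hav i), hvv0 i⟩
    intro i i' h
    simp only at h
    have hu : IsUnit (j : ZMod q) := by
      rw [← orderOf_pos_iff.trans isOfFinOrder_iff_isUnit, hj]
      exact hm
    have hfin : IsOfFinOrder μ := isOfFinOrder_iff_pow_eq_one.mpr ⟨q, hq.pos, hμ.pow_eq_one⟩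
    rw [hfin.pow_eq_pow_iff_modEq, ← hμ.eq_orderOf, ← ZMod.natCast_eq_natCast_iff, Nat.cast_pow,
      Nat.cast_pow] at h
    apply Fin.ext
    exact pow_injOn_Iio_orderOf (by simp [hj]) (by simp [hj]) h
  have hspan : ⊤ ≤ Submodule.span ℂ (Set.range vv) := by
    have hmem : ∀ i : ℕ, i < m → ρ (b⁻¹ ^ i) v ∈ Submodule.span ℂ (Set.range vv) := fun i hi =>
      Submodule.subset_span ⟨⟨i, hi⟩, rfl⟩
    have hstab : ∀ g, ∀ x ∈ Submodule.span ℂ (Set.range vv),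
        ρ g x ∈ Submodule.span ℂ (Set.range vv) := by
      intro g
      refine forall_of_closure hgen' (fun g => ∀ x ∈ Submodule.span ℂ (Set.range vv),
        ρ g x ∈ Submodule.span ℂ (Set.range vv)) ?_ ?_ ?_ ?_ g
      · intro x hx; simpa using hx
      · intro x hx
        induction hx using Submodule.span_induction with
        | mem x hx =>
          obtain ⟨i, rfl⟩ := hx
          rw [rep_translate_apply ρ hba hav]
          exact Submodule.smul_mem _ _ (hmem i i.2)
        | zero => simp
        | add x y _ _ hx hy => rw [map_add]; exact add_mem hx hy
        | smul r x _ hx => rw [map_smul]; exact Submodule.smul_mem _ _ hx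
      · intro x hx
        induction hx using Submodule.span_induction with
        | mem x hx =>
          obtain ⟨i, rfl⟩ := hx
          rw [rep_pow_succ_apply]
          rcases (Nat.succ_le_of_lt i.2).lt_or_eq with h | h
          · exact hmem _ h
          · rw [Nat.succ_eq_add_one] at h
            rw [h, rep_inv_pow_apply ρ hν hcv]
            exact Submodule.smul_mem _ _ (by simpa using hmem 0 hm)
        | zero => simp
        | add x y _ _ hx hy => rw [map_add]; exact add_mem hx hy
        | smul r x _ hx => rw [map_smul]; exact Submodule.smul_mem _ _ hx
      · intro x y hx hy z hz
        rw [map_mul]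
        exact hx _ (hy z hz)
    exact ((hirr _ hstab).resolve_left
      ((Submodule.ne_bot_iff _).mpr ⟨v, by simpa using hmem 0 hm, hv0⟩)).ge
  let B := Module.Basis.mk hlin hspan
  have hB : ∀ i, B i = ρ (b⁻¹ ^ (i : ℕ)) v := fun i => Module.Basis.mk_apply hlin hspan i
  have hB0 : B ⟨0, hm⟩ = v := by simp [hB]
  have hdv : ρ d v = ξ • v := by
    rw [hd, map_mul, Module.End.mul_apply, hcv, map_smul, hav, smul_smul, hξ, mul_comm]
  let ev : Representation.IntertwiningMap ρ σ →ₗ[ℂ] Module.End.eigenspace (σ d) ξ :=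
    { toFun := fun f => ⟨f.toLinearMap v, by
        have h := LinearMap.congr_fun (f.isIntertwining' d) v
        simp only [LinearMap.comp_apply] at h
        rw [Module.End.mem_eigenspace_iff, ← h, hdv, map_smul]⟩
      map_add' := fun f g => rfl
      map_smul' := fun r f => rfl }
  refine (LinearEquiv.ofBijective ev ⟨?_, ?_⟩).finrank_eq
  · rw [injective_iff_map_eq_zero]
    intro f hf
    have hf' : f.toLinearMap v = 0 := congrArg Subtype.val hf
    apply Representation.IntertwiningMap.ext
    refine B.ext fun i => ?_
    have h := LinearMap.congr_fun (f.isIntertwining' (b⁻¹ ^ (i : ℕ))) v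
    simp only [LinearMap.comp_apply] at h
    rw [hB, h, hf', map_zero]
    rfl
  · rintro ⟨w, hw⟩
    rw [Module.End.mem_eigenspace_iff] at hw
    have haw : σ a w = μ • w := by rw [← he₁, rep_pow_apply σ hw, hξ₁]
    have hcw : σ (b ^ m) w = ν • w := by rw [← he₂, rep_pow_apply σ hw, hξ₂]
    let f : V →ₗ[ℂ] W := B.constr ℂ fun i => σ (b⁻¹ ^ (i : ℕ)) w
    have hf : ∀ i : ℕ, i < m → f (ρ (b⁻¹ ^ i) v) = σ (b⁻¹ ^ i) w := by
      intro i hi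
      have := B.constr_basis ℂ (fun i : Fin m => σ (b⁻¹ ^ (i : ℕ)) w) ⟨i, hi⟩
      rwa [hB] at this
    have hf0 : f v = w := by simpa using hf 0 hm
    have hcomm : ∀ g, f ∘ₗ ρ g = σ g ∘ₗ f := by
      intro g
      refine forall_of_closure hgen' (fun g => f ∘ₗ ρ g = σ g ∘ₗ f) ?_ ?_ ?_ ?_ g
      · simp [Module.End.one_eq_id]
      · refine B.ext fun i => ?_
        simp only [LinearMap.comp_apply]
        rw [hB, rep_translate_apply ρ hba hav, map_smul, hf i i.2, rep_translate_apply σ hba haw]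
      · refine B.ext fun i => ?_
        simp only [LinearMap.comp_apply]
        rw [hB, hf i i.2, rep_pow_succ_apply, rep_pow_succ_apply]
        rcases (Nat.succ_le_of_lt i.2).lt_or_eq with h | h
        · exact hf _ h
        · rw [Nat.succ_eq_add_one] at h
          rw [h, rep_inv_pow_apply ρ hν hcv, rep_inv_pow_apply σ hν hcw, map_smul, hf0]
      · intro x y hx hy
        rw [map_mul, map_mul, Module.End.mul_eq_comp, Module.End.mul_eq_comp,
          ← LinearMap.comp_assoc, hx, LinearMap.comp_assoc, hy, LinearMap.comp_assoc]
    exact ⟨⟨f, hcomm⟩, Subtype.ext hf0⟩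

/-! ### The multiplicity in a rational representation -/

/-- The complexification of a rational representation, the latter being given in matrix form. -/
noncomputable def complexification {G : Type*} [Group G] {d : ℕ} (S : G →* Matrix (Fin d) (Fin d) ℚ) :
    Representation ℂ G (Fin d → ℂ) where
  toFun g := Matrix.toLin' ((S g).map (algebraMap ℚ ℂ))
  map_one' := by
    rw [map_one, Matrix.map_one _ (map_zero _) (map_one _), Matrix.toLin'_one]
    rfl
  map_mul' g h := by
    rw [map_mul, Matrix.map_mul, Matrix.toLin'_mul]
    rfl

/-- The multiplicity of a faithful irreducible `ρ` in the complexification of a rational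
representation is divisible by `p`, with the multiplicity expressed as the dimension of the space
of intertwining maps. -/
theorem dvd_finrank_intertwiningMap {p q n r j d : ℕ} (hp : p.Prime) (hq : q.Prime)
    (hpodd : Odd p) (hpq : p ≠ q) (hr : 0 < r) (hrn : r ≤ n) (hdvd : p ^ r ∣ q - 1)
    {G V : Type*} [Group G] [Finite G] {a b : G} (ha : orderOf a = q) (hb : orderOf b = p ^ n)
    (hba : b * a * b⁻¹ = a ^ j) (hj : orderOf (j : ZMod q) = p ^ r)
    (hgen : Subgroup.closure {a, b} = ⊤) [AddCommGroup V] [Module ℂ V] [FiniteDimensional ℂ V]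
    [Nontrivial V] (ρ : Representation ℂ G V) (hinj : Function.Injective ρ)
    (hirr : ∀ S : Submodule ℂ V, (∀ g, ∀ x ∈ S, ρ g x ∈ S) → S = ⊥ ∨ S = ⊤)
    (hnd : ¬ p ^ n ∣ q - 1) (S : G →* Matrix (Fin d) (Fin d) ℚ) :
    p ∣ Module.finrank ℂ (Representation.IntertwiningMap ρ (complexification S)) := by
  obtain ⟨s, rfl⟩ := Nat.exists_eq_add_of_le hrn
  have hs : 0 < s := by
    rcases Nat.eq_zero_or_pos s with rfl | h
    · exact absurd hdvd hnd
    · exact h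
  have hcop : q.Coprime (p ^ s) := ((Nat.coprime_primes hq hp).mpr hpq.symm).pow_right s
  have hm : 0 < p ^ r := pow_pos hp.pos r
  have hca : Commute (b ^ p ^ r) a := commute_of_orderOf ha hba hj
  have hc : orderOf (b ^ p ^ r) = p ^ s := by
    rw [orderOf_pow_of_dvd hm.ne' (by rw [hb]; exact pow_dvd_pow _ hrn), hb, pow_add,
      Nat.mul_div_cancel_left _ hm]
  have hcent : ∀ g, Commute (b ^ p ^ r) g :=
    forall_of_closure hgen _ (Commute.one_right _) hca (Commute.pow_self b _)
      fun x y hx hy => hx.mul_right hy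
  obtain ⟨μ, ν, v, hv0, hav, hcv, hμ, hν⟩ := exists_eigenvector ρ hinj hirr hq ha hc hcent
  have hξ : IsPrimitiveRoot (μ * ν) (q * p ^ s) := by
    rw [IsPrimitiveRoot.iff_orderOf, (Commute.all μ ν).orderOf_mul_eq_mul_orderOf_of_coprime,
      ← hμ.eq_orderOf, ← hν.eq_orderOf]
    rwa [← hμ.eq_orderOf, ← hν.eq_orderOf]
  have hν0 : ν ≠ 0 := hν.ne_zero (pow_ne_zero _ hp.ne_zero)
  obtain ⟨e₁, he₁q, he₁p⟩ := Nat.chineseRemainder hcop 1 0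
  obtain ⟨e₂, he₂q, he₂p⟩ := Nat.chineseRemainder hcop 0 1
  obtain ⟨u, huq, hup⟩ := Nat.chineseRemainder hcop j 1
  have hapow : ∀ {k l : ℕ}, k ≡ l [MOD q] → a ^ k = a ^ l := fun h => by
    rwa [pow_eq_pow_iff_modEq, ha]
  have hcpow : ∀ {k l : ℕ}, k ≡ l [MOD p ^ s] → (b ^ p ^ r) ^ k = (b ^ p ^ r) ^ l := fun h => by
    rwa [pow_eq_pow_iff_modEq, hc]
  have hμpow : ∀ {k l : ℕ}, k ≡ l [MOD q] → μ ^ k = μ ^ l := fun {k l} h => by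
    rw [pow_eq_pow_mod k hμ.pow_eq_one, h, ← pow_eq_pow_mod l hμ.pow_eq_one]
  have hνpow : ∀ {k l : ℕ}, k ≡ l [MOD p ^ s] → ν ^ k = ν ^ l := fun {k l} h => by
    rw [pow_eq_pow_mod k hν.pow_eq_one, h, ← pow_eq_pow_mod l hν.pow_eq_one]
  have hξ₂ : (μ * ν) ^ e₂ = ν := by
    rw [mul_pow, hμpow he₂q, hνpow he₂p, pow_zero, one_mul, pow_one]
  have he₂ : (a * b ^ p ^ r) ^ e₂ = b ^ p ^ r := by
    rw [hca.symm.mul_pow, hapow he₂q, hcpow he₂p, pow_zero, one_mul, pow_one]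
  rw [finrank_intertwiningMap ρ (complexification S) hirr hq ha hba hj hm hgen hv0 hav (hcv v) hμ
    hν0 (d := a * b ^ p ^ r) rfl (ξ := μ * ν) rfl (e₁ := e₁) (e₂ := e₂)
    (by rw [hca.symm.mul_pow, hapow he₁q, hcpow he₁p, pow_zero, mul_one, pow_one]) he₂
    (by rw [mul_pow, hμpow he₁q, hνpow he₁p, pow_zero, mul_one, pow_one]) hξ₂]
  refine dvd_finrank_eigenspace hp hq hpodd hpq hr hs hdvd hnd hj huq hup hξ (S b)
    (S (a * b ^ p ^ r)) (w := e₂) ?_ ?_ ?_ (by rwa [hξ₂])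
  · rw [← map_pow, hca.symm.mul_pow, pow_mul, ← ha, pow_orderOf_eq_one, one_pow, one_mul, mul_comm,
      pow_mul, ← hc, pow_orderOf_eq_one, one_pow, map_one]
  · rw [← map_pow, ← map_mul, ← map_mul, hca.symm.mul_pow, hapow huq, hcpow hup, pow_one, ← hba]
    rw [mul_assoc _ _ b, (hcent b).eq]
    simp only [mul_assoc, inv_mul_cancel_left]
  · rw [← map_pow, ← map_pow, he₂]

theorem eq_bot_or_eq_top_of_simple {G : Type} [Group G] (τ : FDRep ℂ G) [Simple τ]
    (S : Submodule ℂ τ) (hS : ∀ g, ∀ x ∈ S, τ.ρ g x ∈ S) : S = ⊥ ∨ S = ⊤ := by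
  let ρS : Representation ℂ G S :=
    { toFun := fun g => (τ.ρ g).restrict (hS g)
      map_one' := by ext x; simp
      map_mul' := fun g h => by ext x; simp }
  let f : FDRep.of ρS ⟶ τ := FDRep.forget₂HomLinearEquiv (FDRep.of ρS) τ
    (Rep.ofHom ⟨S.subtype, fun g => by ext x; rfl⟩)
  have hfx : ∀ x : S, f x = (x : τ) := fun x => rfl
  have : Mono f := ConcreteCategory.mono_of_injective f fun x y h => Subtype.ext h
  by_cases h0 : f = 0
  · left
    rw [eq_bot_iff]
    intro x hx
    have h1 := hfx ⟨x, hx⟩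
    rw [h0] at h1
    exact h1.symm
  · right
    have := isIso_of_mono_of_nonzero h0
    rw [eq_top_iff]
    intro x _
    obtain ⟨y, hy⟩ := (FDRep.isoToLinearEquiv (asIso f)).surjective x
    rw [← hy]
    exact y.2

theorem nontrivial_of_simple {G : Type} [Group G] (τ : FDRep ℂ G) [Simple τ] : Nontrivial τ := by
  by_contra h
  rw [not_nontrivial_iff_subsingleton] at h
  refine Simple.not_isZero τ ((Limits.IsZero.iff_id_eq_zero τ).mpr ?_)
  ext x
  exact Subsingleton.elim _ _

/-- The bilinear pairing of the characters of `σ` and `ρ` is the multiplicity of `ρ` in the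
complexification of a rational representation, namely of the dual of `σ`. -/
theorem card_inv_mul_sum_char {G : Type} [Group G] [Fintype G] (σ : FDRep ℚ G) {V : Type*}
    [AddCommGroup V] [Module ℂ V] [FiniteDimensional ℂ V] (ρ : Representation ℂ G V) :
    ∃ (d : ℕ) (S : G →* Matrix (Fin d) (Fin d) ℚ),
      (Fintype.card G : ℂ)⁻¹ * ∑ g : G, (σ.character g : ℂ) * ρ.character g =
        Module.finrank ℂ (Representation.IntertwiningMap ρ (complexification S)) := by
  let B := Module.finBasis ℚ (Module.Dual ℚ σ)
  let S : G →* Matrix (Fin (Module.finrank ℚ (Module.Dual ℚ σ)))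
      (Fin (Module.finrank ℚ (Module.Dual ℚ σ))) ℚ :=
    (LinearMap.toMatrixAlgEquiv B).toAlgHom.toRingHom.toMonoidHom.comp (Representation.dual σ.ρ)
  refine ⟨_, S, ?_⟩
  have hchar : ∀ g, (complexification S).character g = (σ.character g⁻¹ : ℂ) := by
    intro g
    have h1 : Matrix.trace (S g) = σ.character g⁻¹ := by
      rw [FDRep.character, ← Representation.character, ← Representation.char_dual,
        Representation.character]
      exact (LinearMap.trace_eq_matrix_trace ℚ B _).symm
    rw [← h1, Representation.character]
    change LinearMap.trace ℂ _ (Matrix.toLin' ((S g).map (algebraMap ℚ ℂ))) = _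
    rw [Matrix.trace_toLin'_eq]
    simp [Matrix.trace]
  let _ : Invertible (Nat.card G : ℂ) := invertibleOfNonzero (by simp)
  rw [← Representation.card_inv_mul_sum_char_mul_char_eq_finrank, Nat.card_eq_fintype_card]
  congr 1
  rw [← Equiv.sum_comp (Equiv.inv G)]
  exact sum_congr rfl fun g _ => by rw [hchar, Equiv.inv_apply]

/-- Let `p, q` be distinct odd primes, `G = C_q ⋊ C_{p^n}` non-abelian
(presented by `a, b` with `a^q = b^{p^n} = 1`, `b a b⁻¹ = a^j`, `j` of order `p^r` mod `q`),
`τ` a faithful irreducible complex representation of `G`, and suppose `p^n ∤ q - 1`.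
Then for every finite-dimensional rational representation `σ` of `G`, the multiplicity
`⟨ℂ ⊗_ℚ σ, τ⟩` of `τ` in the complexification of `σ` is divisible by `p`.  The multiplicity
is expressed via the character inner product. -/
theorem multiplicity_in_rational_rep_divisible
    (p q n r : ℕ) (hp : p.Prime) (hq : q.Prime) (hpodd : Odd p) (hqodd : Odd q)
    (hpq : p ≠ q) (hn : 1 ≤ n) (hr0 : 0 < r) (hrn : r ≤ n) (hrdvd : p ^ r ∣ q - 1)
    (G : Type) [Group G] [Fintype G] (a b : G) (j : ℕ)
    (ha : orderOf a = q) (hb : orderOf b = p ^ n)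
    (hba : b * a * b⁻¹ = a ^ j) (hj : orderOf (j : ZMod q) = p ^ r)
    (hgen : Subgroup.closure {a, b} = ⊤)
    (τ : FDRep ℂ G) [Simple τ] (hτ : Function.Injective τ.ρ)
    (hndvd : ¬ p ^ n ∣ q - 1)
    (σ : FDRep ℚ G) :
    ∃ m : ℕ,
      (Fintype.card G : ℂ)⁻¹ *
          ∑ g : G, (σ.character g : ℂ) * (starRingEnd ℂ) (τ.character g) =
        (p * m : ℕ) := by
  have := nontrivial_of_simple τ
  obtain ⟨d, S, hS⟩ := card_inv_mul_sum_char σ τ.ρ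
  obtain ⟨m, hm⟩ := dvd_finrank_intertwiningMap hp hq hpodd hpq hr0 hrn hrdvd ha hb hba hj hgen
    τ.ρ hτ (eq_bot_or_eq_top_of_simple τ) hndvd S
  refine ⟨m, ?_⟩
  -- The character of `σ` is rational, so conjugating the bilinear pairing gives the inner product.
  have h := congrArg (starRingEnd ℂ) hS
  rw [hm, map_mul, map_inv₀, map_natCast, map_natCast, map_sum] at h
  simp only [map_mul, map_ratCast] at h
  exact h
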